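/- arXiv:2306.17272 — 2 statements merged into one kernel-verified Lean document; each statement's English description precedes it below -/
import Mathlib

section
/- The only connected graphs with girth at least 5 that belong to the class W2 are C5 and K2; that is, if G is a connected graph of girth at least 5 and G ∈ W2, then G is isomorphic to C5 or to K2. -/
open SimpleGraph

/-- A set of vertices is independent if its elements are pairwise nonadjacent. -/
def IsIndep {V : Type*} (G : SimpleGraph V) (S : Set V) : Prop :=
  S.Pairwise fun a b => ¬ G.Adj a b

/-- The closed neighborhood `N[S]` of a set of vertices. -/
def closedNbhd {V : Type*} (G : SimpleGraph V) (S : Set V) : Set V :=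
  S ∪ {x | ∃ s ∈ S, G.Adj s x}

/-- The open neighborhood `N(S) = N[S] \ S` of a set of vertices. -/
def openNbhd {V : Type*} (G : SimpleGraph V) (S : Set V) : Set V :=
  closedNbhd G S \ S

/-- `S` dominates `T` if `T ⊆ N[S]`. -/
def Dominates {V : Type*} (G : SimpleGraph V) (S T : Set V) : Prop :=
  T ⊆ closedNbhd G S

/-- `N₂(v)`: the set of vertices at distance exactly 2 from `v`. -/
def N2 {V : Type*} (G : SimpleGraph V) (v : V) : Set V :=
  {u | u ≠ v ∧ ¬ G.Adj v u ∧ ∃ w, G.Adj v w ∧ G.Adj w u}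

/-- A maximal independent set of the subgraph of `G` induced by `A`. -/
def IsMaximalIndepOn {V : Type*} (G : SimpleGraph V) (A S : Set V) : Prop :=
  S ⊆ A ∧ IsIndep G S ∧ ∀ T, T ⊆ A → IsIndep G T → S ⊆ T → S = T

/-- A maximal independent set of `G`. -/
def IsMaximalIndep {V : Type*} (G : SimpleGraph V) (S : Set V) : Prop :=
  IsMaximalIndepOn G Set.univ S

/-- A maximum independent set of the subgraph of `G` induced by `A`. -/
def IsMaxIndepOn {V : Type*} (G : SimpleGraph V) (A S : Set V) : Prop :=
  S ⊆ A ∧ IsIndep G S ∧ ∀ T, T ⊆ A → IsIndep G T → T.ncard ≤ S.ncard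

/-- A maximum independent set of `G`. -/
def IsMaxIndep {V : Type*} (G : SimpleGraph V) (S : Set V) : Prop :=
  IsMaxIndepOn G Set.univ S

/-- The independence number of the subgraph of `G` induced by `A`. -/
noncomputable def alphaOn {V : Type*} (G : SimpleGraph V) (A : Set V) : ℕ :=
  sSup {n | ∃ S, S ⊆ A ∧ IsIndep G S ∧ S.ncard = n}

/-- The independence number `α(G)`. -/
noncomputable def alpha {V : Type*} (G : SimpleGraph V) : ℕ :=
  alphaOn G Set.univ

/-- The subgraph of `G` induced by `A` is well-covered. -/
def WellCoveredOn {V : Type*} (G : SimpleGraph V) (A : Set V) : Prop :=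
  ∀ S, IsMaximalIndepOn G A S → IsMaxIndepOn G A S

/-- `G` is well-covered: every maximal independent set is maximum. -/
def WellCovered {V : Type*} (G : SimpleGraph V) : Prop :=
  WellCoveredOn G Set.univ

/-- The subgraph of `G` induced by `A` is in the class `W₂`. -/
def W2On {V : Type*} (G : SimpleGraph V) (A : Set V) : Prop :=
  ∀ S₁ S₂ : Set V, S₁ ⊆ A → S₂ ⊆ A → IsIndep G S₁ → IsIndep G S₂ → Disjoint S₁ S₂ →
    ∃ T₁ T₂ : Set V, S₁ ⊆ T₁ ∧ S₂ ⊆ T₂ ∧ IsMaxIndepOn G A T₁ ∧ IsMaxIndepOn G A T₂ ∧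
      Disjoint T₁ T₂

/-- `G` belongs to the class `W₂`: every two pairwise disjoint independent sets are
included in two pairwise disjoint maximum independent sets. -/
def W2 {V : Type*} (G : SimpleGraph V) : Prop :=
  W2On G Set.univ

/-- `v` is a shedding vertex: for every independent set `S ⊆ V(G) \ N[v]` there exists
`u ∈ N(v)` such that `S ∪ {u}` is independent. -/
def Shedding {V : Type*} (G : SimpleGraph V) (v : V) : Prop :=
  ∀ S : Set V, Disjoint S (closedNbhd G {v}) → IsIndep G S →
    ∃ u ∈ G.neighborSet v, IsIndep G (insert u S)

/-- The edge `xy` is relating: there is an independent set `S ⊆ V(G) \ N[{x,y}]` such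
that both `S ∪ {x}` and `S ∪ {y}` are maximal independent sets of `G`. -/
def Relating {V : Type*} (G : SimpleGraph V) (x y : V) : Prop :=
  ∃ S : Set V, IsIndep G S ∧ Disjoint S (closedNbhd G {x, y}) ∧
    IsMaximalIndep G (insert x S) ∧ IsMaximalIndep G (insert y S)

/-- `G` contains no cycle of length `k` (as a subgraph). -/
def CycleFree {V : Type*} (G : SimpleGraph V) (k : ℕ) : Prop :=
  ∀ (u : V) (w : G.Walk u u), w.IsCycle → w.length ≠ k

/-- A vertex is simplicial if its closed neighborhood is a clique. -/
def Simplicial {V : Type*} (G : SimpleGraph V) (v : V) : Prop :=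
  G.IsClique (closedNbhd G {v})

/-!
Every vertex of a graph in `W₂` is shedding: no independent set of `G - N[v]` dominates `N(v)`.
In a graph of girth at least 5, try to violate this at a vertex `v` of minimum degree `d` by
choosing greedily, for one neighbor `u` of `v` after another, a neighbor `w ≠ v` of `u` that is not
adjacent to the earlier choices. Each earlier choice excludes at most one of the `deg u - 1 ≥ d - 1`
candidates, so the greedy choice can only fail at the last neighbor `u`, and then each of the
`d - 1` earlier choices excludes a candidate that no other one does. Hence `deg u = d`, and by
connectedness `G` is `d`-regular. If `d ≥ 3`, two of the earlier choices can be made to exclude the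
same candidate, a contradiction. If `d = 2`, the candidate at the last neighbor that is excluded by
the only earlier choice closes a 5-cycle.
-/

section Preconnected

variable {V W : Type*} {G : SimpleGraph V} {H : SimpleGraph W}

theorem forall_of_preconnected (hG : G.Preconnected) {p : V → Prop}
    (hp : ∀ a b, G.Adj a b → p a → p b) {v : V} (hv : p v) (x : V) : p x := by
  obtain ⟨w⟩ := hG v x
  induction w with
  | nil => exact hv
  | cons hadj _ ih => exact ih (hp _ _ hadj hv)

theorem exists_adj_eq_of_degree_le [G.LocallyFinite] [H.LocallyFinite] (f : Copy H G) {x : W}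
    (hdeg : G.degree (f x) ≤ H.degree x) {y : V} (hy : G.Adj (f x) y) :
    ∃ x', H.Adj x x' ∧ f x' = y := by
  have hcard : Fintype.card (H.neighborSet x) = Fintype.card (G.neighborSet (f x)) := by
    simpa only [card_neighborSet_eq_degree] using (f.degree_le x).antisymm hdeg
  have hbij := (Fintype.bijective_iff_injective_and_card _).2
    ⟨(f.mapNeighborSet x).injective, hcard⟩
  obtain ⟨⟨x', hx'⟩, hfx'⟩ := hbij.surjective ⟨y, hy⟩
  exact ⟨x', hx', congrArg Subtype.val hfx'⟩

theorem nonempty_iso_of_isContained_of_degree_le [G.LocallyFinite] [H.LocallyFinite] [Nonempty W]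
    (hG : G.Preconnected) (hHG : H ⊑ G) (hdeg : ∀ x y, G.degree x ≤ H.degree y) :
    Nonempty (G ≃g H) := by
  obtain ⟨f⟩ := hHG
  have hsurj : Function.Surjective f := by
    refine forall_of_preconnected hG ?_ ⟨Classical.arbitrary W, rfl⟩
    rintro _ b hab ⟨x, rfl⟩
    obtain ⟨x', -, hx'⟩ := exists_adj_eq_of_degree_le f (hdeg _ _) hab
    exact ⟨x', hx'⟩
  have hadj (x y : W) : G.Adj (f x) (f y) ↔ H.Adj x y := by
    refine ⟨fun h => ?_, f.toHom.map_adj⟩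
    obtain ⟨y', hxy', hy'⟩ := exists_adj_eq_of_degree_le f (hdeg _ _) h
    rwa [← f.injective hy']
  exact ⟨(RelIso.mk (Equiv.ofBijective f ⟨f.injective, hsurj⟩) (hadj _ _) : H ≃g G).symm⟩

end Preconnected

section Girth

variable {V : Type*} {G : SimpleGraph V}

theorem not_adj_of_four_le_egirth (hG : 4 ≤ G.egirth) {a b c : V} (hab : G.Adj a b)
    (hbc : G.Adj b c) : ¬ G.Adj a c := by
  intro hac
  have hcycle : (Walk.cons hab (.cons hbc (.cons hac.symm .nil))).IsCycle := by
    simp [Walk.isCycle_iff_isPath_tail_and_le_length, hab.ne', hbc.ne, hac.ne']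
  exact absurd (hG.trans (egirth_le_length hcycle)) (by norm_num)

theorem subsingleton_commonNeighbors_of_five_le_egirth (hG : 5 ≤ G.egirth) {a b : V}
    (hab : a ≠ b) : (G.commonNeighbors a b).Subsingleton := by
  rintro c ⟨hac : G.Adj a c, hbc : G.Adj b c⟩ d ⟨had : G.Adj a d, hbd : G.Adj b d⟩
  by_contra hcd
  have hcycle : (Walk.cons hac (.cons hbc.symm (.cons hbd (.cons had.symm .nil)))).IsCycle := by
    simp [Walk.isCycle_iff_isPath_tail_and_le_length, hac.ne', hbc.ne', had.ne', hbd.ne, hab.symm,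
      hcd]
  exact absurd (hG.trans (egirth_le_length hcycle)) (by norm_num)

end Girth

section Domination

variable {V : Type*} {G : SimpleGraph V} {u v w : V}

/-- `S` is an independent subset of `V(G) \ N[v]`: the sets over which `Shedding G v` quantifies. -/
structure IsIndepAway (G : SimpleGraph V) (v : V) (S : Set V) : Prop where
  isIndep : IsIndep G S
  disjoint_closedNbhd : Disjoint S (closedNbhd G {v})

theorem isIndepAway_empty : IsIndepAway G v ∅ :=
  ⟨Set.pairwise_empty _, Set.empty_disjoint _⟩

theorem disjoint_closedNbhd_singleton {S : Set V} :
    Disjoint S (closedNbhd G {v}) ↔ ∀ s ∈ S, s ≠ v ∧ ¬ G.Adj v s := by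
  simp [Set.disjoint_left, closedNbhd]

theorem isIndep_insert {S : Set V} (hw : w ∉ S) :
    IsIndep G (insert w S) ↔ IsIndep G S ∧ ∀ s ∈ S, ¬ G.Adj s w := by
  simp [IsIndep, Set.pairwise_insert_of_notMem hw, G.adj_comm w]

theorem IsIndepAway.insert_of_not_adj {S : Set V} (hS : IsIndepAway G v S) (hwv : w ≠ v)
    (hvw : ¬ G.Adj v w) (hSw : ∀ s ∈ S, ¬ G.Adj s w) : IsIndepAway G v (insert w S) := by
  refine ⟨?_, disjoint_closedNbhd_singleton.2 ?_⟩
  · by_cases hw : w ∈ S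
    · simpa only [Set.insert_eq_of_mem hw] using hS.isIndep
    · exact (isIndep_insert hw).2 ⟨hS.isIndep, hSw⟩
  · rintro s (rfl | hs)
    exacts [⟨hwv, hvw⟩, disjoint_closedNbhd_singleton.1 hS.disjoint_closedNbhd s hs]

theorem IsIndepAway.notMem_of_adj {S : Set V} (hS : IsIndepAway G v S) (hvu : G.Adj v u) : u ∉ S :=
  fun hu => (disjoint_closedNbhd_singleton.1 hS.disjoint_closedNbhd u hu).2 hvu

theorem Shedding.exists_adj_forall_not_adj (hv : Shedding G v) {S : Set V}
    (hS : IsIndepAway G v S) : ∃ u, G.Adj v u ∧ ∀ s ∈ S, ¬ G.Adj s u := by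
  obtain ⟨u, hvu, hu⟩ := hv S hS.disjoint_closedNbhd hS.isIndep
  exact ⟨u, hvu, ((isIndep_insert (hS.notMem_of_adj hvu)).1 hu).2⟩

theorem Shedding.exists_adj (hv : Shedding G v) : ∃ u, G.Adj v u :=
  (hv.exists_adj_forall_not_adj isIndepAway_empty).imp fun _ => And.left

theorem W2.shedding (hG : W2 G) (v : V) : Shedding G v := by
  intro S hSv hS
  have hvS : v ∉ S := fun hv => (disjoint_closedNbhd_singleton.1 hSv v hv).1 rfl
  obtain ⟨T, R, hST, hvR, hT, -, hTR⟩ := hG S {v} (Set.subset_univ _) (Set.subset_univ _) hS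
    (Set.pairwise_singleton _ _) (Set.disjoint_singleton_right.2 hvS)
  have hvT : v ∉ T := Set.disjoint_right.1 hTR (hvR rfl)
  have hTfin : T.Finite := Set.finite_of_ncard_pos <| by
    simpa [Nat.succ_le_iff] using hT.2.2 {v} (Set.subset_univ _) (Set.pairwise_singleton _ _)
  have hnot : ¬ IsIndep G (insert v T) := fun h => by
    simpa [Set.ncard_insert_of_notMem hvT hTfin] using hT.2.2 _ (Set.subset_univ _) h
  obtain ⟨u, huT, huv⟩ : ∃ u ∈ T, G.Adj u v := by simpa [isIndep_insert hvT, hT.2.1] using hnot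
  exact ⟨u, huv.symm, hT.2.1.mono (Set.insert_subset huT hST)⟩

variable [G.LocallyFinite]

theorem degree_le_card_add_one (hG : 5 ≤ G.egirth) {R : Finset V} (huR : u ∉ R)
    (hR : ∀ w, G.Adj u w → w ≠ v → ∃ s ∈ R, G.Adj s w) : G.degree u ≤ R.card + 1 := by
  classical
  have hcard : ((G.neighborFinset u).erase v).card ≤ R.card := by
    refine Finset.card_le_card_of_forall_subsingleton (fun w s => G.Adj s w) ?_ ?_
    · intro w hw
      rw [Finset.mem_erase, mem_neighborFinset] at hw
      exact hR w hw.2 hw.1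
    · intro s hs
      refine (subsingleton_commonNeighbors_of_five_le_egirth hG
        (ne_of_mem_of_not_mem hs huR).symm).anti ?_
      rintro w ⟨hw, hsw⟩
      exact ⟨(G.mem_neighborFinset u w).1 (Finset.mem_of_mem_erase hw), hsw⟩
  have := (Finset.pred_card_le_card_erase (s := G.neighborFinset u) (a := v)).trans hcard
  rw [card_neighborFinset_eq_degree] at this
  omega

theorem IsIndepAway.exists_insert_of_lt_degree (hG : 5 ≤ G.egirth) {S : Finset V}
    (hS : IsIndepAway G v S) (hvu : G.Adj v u) (hdeg : S.card + 1 < G.degree u) :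
    ∃ w, G.Adj u w ∧ IsIndepAway G v (insert w S) := by
  by_contra! hmax
  refine hdeg.not_ge (degree_le_card_add_one hG (v := v) (hS.notMem_of_adj hvu) ?_)
  intro w huw hwv
  by_contra! hSw
  have hvw := not_adj_of_four_le_egirth (le_trans (by norm_num) hG) hvu huw
  exact hmax w huw (hS.insert_of_not_adj hwv hvw hSw)

theorem IsIndepAway.exists_superset_dominating (hG : 5 ≤ G.egirth) {S T : Finset V}
    (hS : IsIndepAway G v S) (hT : ∀ u ∈ T, G.Adj v u)
    (hdeg : ∀ u ∈ T, S.card + T.card < G.degree u) :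
    ∃ S' : Finset V, S ⊆ S' ∧ IsIndepAway G v S' ∧ S'.card ≤ S.card + T.card ∧
      ∀ u ∈ T, ∃ s ∈ S', G.Adj s u := by
  classical
  induction T using Finset.induction_on with
  | empty => exact ⟨S, subset_rfl, hS, le_self_add, by simp⟩
  | insert u T hu ih =>
    simp only [Finset.forall_mem_insert, Finset.card_insert_of_notMem hu] at hT hdeg ⊢
    obtain ⟨S', hSS', hS', hcard, hdom⟩ := ih hT.2 fun x hx => by have := hdeg.2 x hx; omega
    obtain ⟨w, huw, hw⟩ := hS'.exists_insert_of_lt_degree hG hT.1 (by omega)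
    refine ⟨insert w S', hSS'.trans (Finset.subset_insert _ _), by simpa using hw, ?_,
      ⟨w, Finset.mem_insert_self _ _, huw.symm⟩, fun x hx => ?_⟩
    · have := Finset.card_insert_le w S'
      omega
    · obtain ⟨s, hs, hsx⟩ := hdom x hx
      exact ⟨s, Finset.mem_insert_of_mem hs, hsx⟩

end Domination

section MinimumDegree

variable {V : Type*} {G : SimpleGraph V} [G.LocallyFinite] {u v : V}

theorem Shedding.exists_superset_blocking (hG : 5 ≤ G.egirth) (hv : Shedding G v)
    (hmin : ∀ x, G.Adj v x → G.degree v ≤ G.degree x) (hvu : G.Adj v u) {S U : Finset V}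
    (hS : IsIndepAway G v S) (hU : ∀ x ∈ U, G.Adj v x ∧ x ≠ u ∧ ∃ s ∈ S, G.Adj s x)
    (hSU : S.card ≤ U.card) :
    ∃ S' : Finset V, S ⊆ S' ∧ IsIndepAway G v S' ∧ S'.card < G.degree v ∧
      ∀ w, G.Adj u w → w ≠ v → ∃ s ∈ S', G.Adj s w := by
  classical
  set T := (G.neighborFinset v).erase u \ U with hTdef
  have hT : ∀ x ∈ T, G.Adj v x := by simp +contextual [hTdef]
  have hcard : S.card + T.card < G.degree v := by
    have hUsub : U ⊆ (G.neighborFinset v).erase u := fun x hx => by simp [hU x hx]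
    have : T.card + U.card = _ := Finset.card_sdiff_add_card_eq_card hUsub
    have := Finset.card_erase_add_one ((G.mem_neighborFinset v u).2 hvu)
    rw [card_neighborFinset_eq_degree] at this
    omega
  obtain ⟨S', hSS', hS', hcard', hdom⟩ :=
    hS.exists_superset_dominating hG hT fun x hx => hcard.trans_le (hmin x (hT x hx))
  refine ⟨S', hSS', hS', hcard'.trans_lt hcard, fun w huw hwv => ?_⟩
  -- Otherwise `S' ∪ {w}` would dominate all of `N(v)`.
  by_contra! hw
  have hvw := not_adj_of_four_le_egirth (le_trans (by norm_num) hG) hvu huw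
  obtain ⟨x, hvx, hx⟩ := hv.exists_adj_forall_not_adj (hS'.insert_of_not_adj hwv hvw hw)
  rw [Set.forall_mem_insert] at hx
  have hxu : x ≠ u := by rintro rfl; exact hx.1 huw.symm
  obtain ⟨s, hs, hsx⟩ : ∃ s ∈ S', G.Adj s x := by
    by_cases hxU : x ∈ U
    · obtain ⟨s, hs, hsx⟩ := (hU x hxU).2.2
      exact ⟨s, hSS' hs, hsx⟩
    · exact hdom x (by simp [hTdef, hvx, hxu, hxU])
  exact hx.2 s hs hsx

theorem Shedding.degree_eq (hG : 5 ≤ G.egirth) (hv : Shedding G v)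
    (hmin : ∀ x, G.Adj v x → G.degree v ≤ G.degree x) (hvu : G.Adj v u) :
    G.degree u = G.degree v := by
  obtain ⟨S, -, hS, hcard, hblock⟩ := hv.exists_superset_blocking hG hmin hvu (S := ∅) (U := ∅)
    (by simpa using isIndepAway_empty) (by simp) le_rfl
  have := degree_le_card_add_one hG (hS.notMem_of_adj hvu) hblock
  exact le_antisymm (by omega) (hmin u hvu)

theorem Shedding.exists_private_neighbor (hG : 5 ≤ G.egirth) (hv : Shedding G v)
    (hmin : ∀ x, G.Adj v x → G.degree v ≤ G.degree x) (hvu : G.Adj v u) {S U : Finset V}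
    (hS : IsIndepAway G v S) (hU : ∀ x ∈ U, G.Adj v x ∧ x ≠ u ∧ ∃ s ∈ S, G.Adj s x)
    (hSU : S.card ≤ U.card) {s₀ : V} (hs₀ : s₀ ∈ S) :
    ∃ b, G.Adj u b ∧ G.Adj s₀ b ∧ ∀ s ∈ S, s ≠ s₀ → ¬ G.Adj s b := by
  classical
  obtain ⟨S', hSS', hS', hcard, hblock⟩ := hv.exists_superset_blocking hG hmin hvu hS hU hSU
  by_contra! hshared
  have hblock' : ∀ w, G.Adj u w → w ≠ v → ∃ s ∈ S'.erase s₀, G.Adj s w := by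
    intro w huw hwv
    obtain ⟨s, hs, hsw⟩ := hblock w huw hwv
    by_cases hss₀ : s = s₀
    · obtain ⟨t, ht, hts₀, htw⟩ := hshared w huw (hss₀ ▸ hsw)
      exact ⟨t, Finset.mem_erase.2 ⟨hts₀, hSS' ht⟩, htw⟩
    · exact ⟨s, Finset.mem_erase.2 ⟨hss₀, hs⟩, hsw⟩
  have hu : u ∉ S'.erase s₀ := fun h => hS'.notMem_of_adj hvu (Finset.mem_of_mem_erase h)
  have := degree_le_card_add_one hG hu hblock'
  have := Finset.card_erase_add_one (hSS' hs₀)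
  have := hmin u hvu
  omega

theorem Shedding.exists_commonNeighbor (hG : 5 ≤ G.egirth) (hv : Shedding G v)
    (hmin : ∀ x, G.Adj v x → G.degree v ≤ G.degree x) {u' w : V} (hvu : G.Adj v u)
    (hvu' : G.Adj v u') (huu' : u' ≠ u) (hu'w : G.Adj u' w) (hwv : w ≠ v) :
    ∃ b, G.Adj u b ∧ G.Adj w b := by
  have hvw := not_adj_of_four_le_egirth (le_trans (by norm_num) hG) hvu' hu'w
  obtain ⟨b, hub, hwb, -⟩ := hv.exists_private_neighbor hG hmin hvu (S := {w}) (U := {u'})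
    (by simpa using isIndepAway_empty.insert_of_not_adj hwv hvw) (by simp [hvu', huu', hu'w.symm])
    (by simp) (Finset.mem_singleton_self w)
  exact ⟨b, hub, hwb⟩

theorem exists_adj_ne_of_one_lt_degree (hu : 1 < G.degree u) (v : V) :
    ∃ w, G.Adj u w ∧ w ≠ v := by
  rw [← card_neighborFinset_eq_degree] at hu
  simpa using Finset.exists_mem_ne hu v

theorem Shedding.degree_le_two (hG : 5 ≤ G.egirth) (hv : Shedding G v)
    (hmin : ∀ x, G.Adj v x → G.degree v ≤ G.degree x) : G.degree v ≤ 2 := by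
  classical
  have h4 : 4 ≤ G.egirth := le_trans (by norm_num) hG
  by_contra! hdeg
  obtain ⟨u₁, u₂, u₃, hvu₁, hvu₂, hvu₃, h₁₂, h₁₃, h₂₃⟩ := Finset.two_lt_card_iff.1 hdeg
  rw [mem_neighborFinset] at hvu₁ hvu₂ hvu₃
  obtain ⟨w₁, hu₁w₁, hw₁v⟩ :=
    exists_adj_ne_of_one_lt_degree (lt_of_lt_of_le (by omega) (hmin u₁ hvu₁)) v
  have hvw₁ := not_adj_of_four_le_egirth h4 hvu₁ hu₁w₁
  obtain ⟨b, hu₃b, hw₁b⟩ := hv.exists_commonNeighbor hG hmin hvu₃ hvu₁ h₁₃ hu₁w₁ hw₁v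
  have hbv : b ≠ v := by rintro rfl; exact hvw₁ hw₁b.symm
  have hvb := not_adj_of_four_le_egirth h4 hvu₃ hu₃b
  obtain ⟨w₂, hu₂w₂, hbw₂⟩ := hv.exists_commonNeighbor hG hmin hvu₂ hvu₃ h₂₃.symm hu₃b hbv
  have hw₂v : w₂ ≠ v := by rintro rfl; exact hvb hbw₂.symm
  have hvw₂ := not_adj_of_four_le_egirth h4 hvu₂ hu₂w₂
  have hw₁₂ : w₁ ≠ w₂ := by
    rintro rfl
    exact h₁₂ (subsingleton_commonNeighbors_of_five_le_egirth hG hw₁v.symm ⟨hvu₁, hu₁w₁.symm⟩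
      ⟨hvu₂, hu₂w₂.symm⟩)
  have hw₁w₂ := not_adj_of_four_le_egirth h4 hw₁b hbw₂
  have hS : IsIndepAway G v (insert w₁ (insert w₂ ∅)) :=
    (isIndepAway_empty.insert_of_not_adj hw₂v hvw₂ (by simp)).insert_of_not_adj hw₁v hvw₁
      (by simpa [G.adj_comm w₂] using hw₁w₂)
  obtain ⟨c, hu₃c, hw₁c, hc⟩ := hv.exists_private_neighbor hG hmin hvu₃ (S := {w₁, w₂})
    (U := {u₁, u₂}) (by simpa using hS)
    (by simp [hvu₁, hvu₂, h₁₃, h₂₃, hu₁w₁.symm, hu₂w₂.symm])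
    (by rw [Finset.card_pair hw₁₂, Finset.card_pair h₁₂]) (Finset.mem_insert_self _ _)
  have hu₃w₁ : u₃ ≠ w₁ := by rintro rfl; exact hvw₁ hvu₃
  have hcb : c = b := subsingleton_commonNeighbors_of_five_le_egirth hG hu₃w₁ ⟨hu₃c, hw₁c⟩
    ⟨hu₃b, hw₁b⟩
  exact hc w₂ (by simp) hw₁₂.symm (hcb ▸ hbw₂.symm)

theorem Shedding.cycleGraph_five_isContained (hG : 5 ≤ G.egirth) (hv : Shedding G v)
    (hmin : ∀ x, G.Adj v x → G.degree v ≤ G.degree x) (hdeg : 2 ≤ G.degree v) :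
    cycleGraph 5 ⊑ G := by
  have h4 : 4 ≤ G.egirth := le_trans (by norm_num) hG
  obtain ⟨u, u', hvu, hvu', huu'⟩ := Finset.one_lt_card_iff.1 hdeg
  rw [mem_neighborFinset] at hvu hvu'
  obtain ⟨w, huw, hwv⟩ := exists_adj_ne_of_one_lt_degree (hdeg.trans (hmin u hvu)) v
  have hvw := not_adj_of_four_le_egirth h4 hvu huw
  obtain ⟨b, hu'b, hwb⟩ := hv.exists_commonNeighbor hG hmin hvu' hvu huu' huw hwv
  have hvb := not_adj_of_four_le_egirth h4 hvu' hu'b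
  have hbv : b ≠ v := by rintro rfl; exact hvw hwb.symm
  have hbu : b ≠ u := by rintro rfl; exact hvb hvu
  have hwu' : w ≠ u' := by rintro rfl; exact hvw hvu'
  rw [cycleGraph_isContained_iff (by norm_num)]
  refine ⟨v, .cons hvu (.cons huw (.cons hwb (.cons hu'b.symm (.cons hvu'.symm .nil)))), ?_, rfl⟩
  simp [Walk.isCycle_iff_isPath_tail_and_le_length, huw.ne, hbu.symm, huu', hvu.ne', hwb.ne, hwu',
    hwv, hu'b.ne', hbv, hvu'.ne']

end MinimumDegree

theorem top_fin_two_isContained {V : Type*} {G : SimpleGraph V} {a b : V} (hab : G.Adj a b) :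
    (⊤ : SimpleGraph (Fin 2)) ⊑ G := by
  rw [← not_cliqueFree_iff_top_isContained, cliqueFree_two]
  rintro rfl
  exact hab

theorem stmt4_general {V : Type*} (G : SimpleGraph V) [G.LocallyFinite] (hconn : G.Connected)
    (hgirth : 5 ≤ G.egirth) (hshed : ∀ v, Shedding G v) :
    Nonempty (G ≃g cycleGraph 5) ∨ Nonempty (G ≃g (⊤ : SimpleGraph (Fin 2))) := by
  classical
  have := hconn.nonempty
  let v := Function.argmin fun x => G.degree x
  have hmin (x : V) : G.degree v ≤ G.degree x := Function.argmin_le (fun x => G.degree x) x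
  have hreg : ∀ x, G.degree x = G.degree v := by
    refine forall_of_preconnected hconn.preconnected (fun a b hab ha => ?_) (v := v) rfl
    rw [(hshed a).degree_eq hgirth (fun x _ => ha ▸ hmin x) hab, ha]
  have hle : G.degree v ≤ 2 := (hshed v).degree_le_two hgirth fun x _ => hmin x
  rcases Nat.lt_or_ge (G.degree v) 2 with hlt | hge
  · right
    obtain ⟨u, hvu⟩ := (hshed v).exists_adj
    refine nonempty_iso_of_isContained_of_degree_le hconn.preconnected
      (top_fin_two_isContained hvu) fun x y => ?_
    rw [hreg, complete_graph_degree, Fintype.card_fin]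
    omega
  · left
    refine nonempty_iso_of_isContained_of_degree_le hconn.preconnected
      ((hshed v).cycleGraph_five_isContained hgirth (fun x _ => hmin x) hge) fun x y => ?_
    rwa [hreg, cycleGraph_degree_three_le]

/-- The only connected graphs with girth at least 5 in the class `W₂`
are `C₅` and `K₂`. -/
theorem stmt4 {V : Type*} [Fintype V] (G : SimpleGraph V) (hconn : G.Connected)
    (hgirth : 5 ≤ G.egirth) (hW2 : W2 G) :
    Nonempty (G ≃g cycleGraph 5) ∨ Nonempty (G ≃g (⊤ : SimpleGraph (Fin 2))) := by
  classical exact stmt4_general G hconn hgirth hW2.shedding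
end

section
/- Let G be a graph containing no cycle of length 5 (as a subgraph), and let v ∈ V(G). Then v is a shedding vertex if and only if N2(v) does not dominate N(v). -/
open SimpleGraph

/-!
Only the part of `S` inside `N₂(v)` can block a neighbour of `v`, so `v` fails to be shedding
exactly when some *independent* `S ⊆ N₂(v)` dominates `N(v)`. Without 5-cycles, if `N₂(v)`
dominates `N(v)` then so does every maximal independent `S ⊆ N₂(v)`: given `u ∈ N(v)` adjacent to
`x ∈ N₂(v)`, and `x ∉ S` adjacent to `s ∈ S`, any common neighbour `w` of `v` and `s` must be `u`
itself, for otherwise `v u x s w` is a 5-cycle.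
-/

section

variable {V : Type*} {G : SimpleGraph V} {S T A B : Set V} {u v : V}

theorem isIndep_insert_iff : IsIndep G (insert u S) ↔ IsIndep G S ∧ ∀ s ∈ S, ¬ G.Adj s u := by
  have symm_not_adj : Std.Symm fun a b => ¬ G.Adj a b := ⟨fun _ _ h h' => h h'.symm⟩
  rw [IsIndep, Set.pairwise_insert_of_symm]
  exact and_congr_right fun _ => forall₂_congr fun s _ =>
    ⟨fun h hsu => h hsu.ne' hsu.symm, fun h _ hus => h hus.symm⟩

theorem disjoint_closedNbhd_singleton_iff :
    Disjoint S (closedNbhd G {v}) ↔ ∀ s ∈ S, s ≠ v ∧ ¬ G.Adj v s := by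
  simp [Set.disjoint_left, closedNbhd]

theorem Dominates.mono_left (h : Dominates G S B) (hST : S ⊆ T) : Dominates G T B :=
  h.trans (Set.union_subset_union hST fun _ ⟨s, hs, hsx⟩ => ⟨s, hST hs, hsx⟩)

theorem exists_isMaximalIndepOn (G : SimpleGraph V) (A : Set V) : ∃ S, IsMaximalIndepOn G A S := by
  obtain ⟨S, hS⟩ := zorn_subset {S | S ⊆ A ∧ IsIndep G S} fun c hc hchain =>
    ⟨⋃₀ c, ⟨Set.sUnion_subset fun s hs => (hc hs).1,
      hchain.pairwise_sUnion.2 fun s hs => (hc hs).2⟩, fun _ => Set.subset_sUnion_of_mem⟩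
  exact ⟨S, hS.prop.1, hS.prop.2, fun T hTA hT hST => hS.eq_of_subset ⟨hTA, hT⟩ hST⟩

theorem IsMaximalIndepOn.dominates (hS : IsMaximalIndepOn G A S) : Dominates G S A := by
  obtain ⟨hSA, hSi, hmax⟩ := hS
  intro x hx
  by_contra hxS
  obtain ⟨hx_mem, hx_adj⟩ : x ∉ S ∧ ∀ s ∈ S, ¬ G.Adj s x := by simpa [closedNbhd] using hxS
  have hins : S = insert x S :=
    hmax _ (Set.insert_subset hx hSA) (isIndep_insert_iff.2 ⟨hSi, hx_adj⟩) (Set.subset_insert x S)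
  exact hx_mem (hins ▸ Set.mem_insert x S)

theorem shedding_iff_forall_subset_N2_not_dominates :
    Shedding G v ↔ ∀ S ⊆ N2 G v, IsIndep G S → ¬ Dominates G S (G.neighborSet v) := by
  constructor
  · intro hv S hSN hSi hdom
    have hdisj := disjoint_closedNbhd_singleton_iff.2 fun s hs => ⟨(hSN hs).1, (hSN hs).2.1⟩
    obtain ⟨u, hvu, hui⟩ := hv S hdisj hSi
    rcases hdom hvu with huS | ⟨s, hs, hsu⟩
    · exact (hSN huS).2.1 hvu
    · exact (isIndep_insert_iff.1 hui).2 s hs hsu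
  · intro h S hdisj hSi
    obtain ⟨u, hvu, hu⟩ := Set.not_subset.1 <|
      h (S ∩ N2 G v) Set.inter_subset_right (hSi.mono Set.inter_subset_left)
    refine ⟨u, hvu, isIndep_insert_iff.2 ⟨hSi, fun s hs hsu => hu <| .inr ⟨s, ⟨hs, ?_⟩, hsu⟩⟩⟩
    obtain ⟨hsv, hvs⟩ := disjoint_closedNbhd_singleton_iff.1 hdisj s hs
    exact ⟨hsv, hvs, u, hvu, hsu.symm⟩

theorem CycleFree.not_adj_of_isPath {k : ℕ} (hG : CycleFree G k) {p : G.Walk u v} (hp : p.IsPath)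
    (hlen : p.length + 1 = k) (hk : k ≠ 2) : ¬ G.Adj v u := by
  intro hvu
  have hedge : s(v, u) ∉ p.edges := fun h =>
    hk (by rw [← hlen, hp.length_eq_one_of_mem_edges (Sym2.eq_swap ▸ h)])
  exact hG v (.cons hvu p) ((p.cons_isCycle_iff hvu).2 ⟨hp, hedge⟩) hlen

theorem CycleFree.adj_of_mem_N2 (hG : CycleFree G 5) {x s : V} (hvu : G.Adj v u) (hux : G.Adj u x)
    (hxs : G.Adj x s) (hx : x ∈ N2 G v) (hs : s ∈ N2 G v) : G.Adj u s := by
  obtain ⟨hxv, hvx, -⟩ := hx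
  obtain ⟨hsv, hvs, w, hvw, hws⟩ := hs
  by_contra hus
  let p : G.Walk v w := .cons hvu (.cons hux (.cons hxs (.cons hws.symm .nil)))
  have hp : p.IsPath := by
    have hu_ne_w : u ≠ w := fun h => hus (h ▸ hws)
    have hx_ne_w : x ≠ w := fun h => hvx (h ▸ hvw)
    have hu_ne_s : u ≠ s := fun h => hvs (h ▸ hvu)
    simp [p, Walk.isPath_def, hvu.ne, hux.ne, hxs.ne, hws.ne', hvw.ne, hxv.symm, hsv.symm,
      hu_ne_w, hx_ne_w, hu_ne_s]
  exact hG.not_adj_of_isPath hp rfl (by decide) hvw.symm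

theorem CycleFree.dominates_neighborSet_of_subset_N2 (hG : CycleFree G 5) (hSN : S ⊆ N2 G v)
    (hS : Dominates G S (N2 G v)) (hN : Dominates G (N2 G v) (G.neighborSet v)) :
    Dominates G S (G.neighborSet v) := by
  intro u hvu
  rcases hN hvu with huN | ⟨x, hx, hxu⟩
  · exact absurd hvu huN.2.1
  rcases hS hx with hxS | ⟨s, hs, hsx⟩
  · exact .inr ⟨x, hxS, hxu⟩
  · exact .inr ⟨s, hs, (hG.adj_of_mem_N2 hvu hxu.symm hsx.symm hx (hSN hs)).symm⟩

theorem stmt6_general (hG : CycleFree G 5) (v : V) :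
    Shedding G v ↔ ¬ Dominates G (N2 G v) (G.neighborSet v) := by
  rw [shedding_iff_forall_subset_N2_not_dominates]
  constructor
  · intro h hN
    obtain ⟨S, hS⟩ := exists_isMaximalIndepOn G (N2 G v)
    exact h S hS.1 hS.2.1 (hG.dominates_neighborSet_of_subset_N2 hS.1 hS.dominates hN)
  · exact fun hN S hSN _ hS => hN (hS.mono_left hSN)

end

/-- In a graph with no cycle of length 5, a vertex `v` is shedding iff
`N₂(v)` does not dominate `N(v)`. -/
theorem stmt6 {V : Type*} [Fintype V] (G : SimpleGraph V)
    (h5 : CycleFree G 5) (v : V) :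
    Shedding G v ↔ ¬ Dominates G (N2 G v) (G.neighborSet v) :=
  stmt6_general h5 v
end
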